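/- arXiv:1912.13238 — 6 statements merged into one kernel-verified Lean document; each statement's English description precedes it below -/
import Mathlib

section
/- Let N be a finite set with |N| = n and f : 2^N → ℝ a set function with f(∅) = 0. If π is an extreme point of the associated polyhedron P_f, then there exist subsets S_1, …, S_n ⊆ N such that π(S_i) = f(S_i) for each i, the indicator vectors χ_{S_1}, …, χ_{S_n} are linearly independent, and the n+1 points (χ_{S_1}, f(S_1)), …, (χ_{S_n}, f(S_n)), (0,0) of Q_f are affinely independent and all satisfy π·x = z; moreover the point (0,1) lies in Q_f but satisfies π·0 < 1, so the face {(x,z) ∈ Q_f : π·x = z} is a proper face. (Content of Proposition 3, forward direction.) -/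
/-!
The indicator vectors of the tight sets `S` (those with `π(S) = f(S)`) span `ℝ^N`: otherwise some
nonzero `d` has `d(S) = 0` for every tight `S`, and since the remaining finitely many constraints
are strict at `π`, both `π + t d` and `π - t d` lie in `P_f` for small `t > 0`, contradicting
extremality. A basis extracted from this spanning family gives the sets `S_1, …, S_n`. Linear
independence of the `χ_{S_i}` passes to their lifts `(χ_{S_i}, f(S_i))`, which is affine independence
of these lifts together with the origin.
-/

/-- A direction orthogonal to every tight constraint at an extreme point of `P_f` vanishes, since
`π` could otherwise be moved both ways along it. -/
lemma direction_eq_zero_of_extreme {α : Type*}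
    [Fintype α] [DecidableEq α] (f : Finset α → ℝ) (π : α → ℝ)
    (hext : π ∈ Set.extremePoints ℝ
      {p : α → ℝ | ∀ S : Finset α, ∑ i ∈ S, p i ≤ f S})
    (d : α → ℝ) (hd : ∀ S : Finset α, ∑ i ∈ S, π i = f S → ∑ i ∈ S, d i = 0) : d = 0 := by
  have hmem : ∀ S : Finset α, ∑ i ∈ S, π i ≤ f S := hext.1
  have hev : ∀ᶠ t : ℝ in nhds 0, ∀ S : Finset α, ∑ i ∈ S, (π + t • d) i ≤ f S := by
    rw [Filter.eventually_all]
    intro S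
    have hsum : ∀ t : ℝ, ∑ i ∈ S, (π + t • d) i = ∑ i ∈ S, π i + t * ∑ i ∈ S, d i := by
      intro t
      simp [Finset.sum_add_distrib, Finset.mul_sum]
    simp only [hsum]
    rcases (hmem S).lt_or_eq with h | h
    · have hc : Continuous fun t : ℝ => ∑ i ∈ S, π i + t * ∑ i ∈ S, d i := by fun_prop
      have hlt := hc.continuousAt.eventually_lt (x₀ := (0 : ℝ)) (continuousAt_const (y := f S))
        (by simpa using h)
      exact hlt.mono fun t ht => ht.le
    · simp [hd S h, h]
  obtain ⟨ε, hε, hball⟩ := Metric.eventually_nhds_iff.1 hev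
  have hp := hball (y := ε / 2) (by rw [Real.dist_eq, sub_zero, abs_of_pos] <;> linarith)
  have hm := hball (y := -(ε / 2))
    (by rw [Real.dist_eq, sub_zero, abs_neg, abs_of_pos] <;> linarith)
  have hseg : π ∈ openSegment ℝ (π + (ε / 2) • d) (π + (-(ε / 2)) • d) := by
    refine ⟨1 / 2, 1 / 2, by norm_num, by norm_num, by norm_num, ?_⟩
    ext i
    simp
    ring
  have heq := hext.2 hp hm hseg
  have hz : (ε / 2) • d = 0 := by simpa using heq
  exact (smul_eq_zero.1 hz).resolve_left (by positivity)

lemma span_tight_eq_top {α : Type*} [Fintype α] [DecidableEq α]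
    (f : Finset α → ℝ) (π : α → ℝ)
    (hext : π ∈ Set.extremePoints ℝ
      {p : α → ℝ | ∀ S : Finset α, ∑ i ∈ S, p i ≤ f S}) :
    Submodule.span ℝ (Set.range fun S : {S : Finset α // ∑ i ∈ S, π i = f S} =>
      (fun j => if j ∈ S.1 then (1 : ℝ) else 0 : α → ℝ)) = ⊤ := by
  by_contra hne
  obtain ⟨φ, hφ, hle⟩ := Submodule.exists_le_ker_of_lt_top _ (lt_top_iff_ne_top.2 hne)
  -- The functional `φ` is `x ↦ d · x` for `d j = φ(e_j)`.
  have hd := direction_eq_zero_of_extreme f π hext (fun j => φ (Pi.single j 1)) (by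
    intro S hS
    have h0 : φ (fun j => if j ∈ S then (1 : ℝ) else 0) = 0 :=
      hle (Submodule.subset_span ⟨⟨S, hS⟩, rfl⟩)
    rw [← map_sum]
    convert h0 using 2
    ext j
    simp [Finset.sum_apply, Pi.single_apply])
  refine hφ (LinearMap.pi_ext' fun j => LinearMap.ext_ring ?_)
  simpa using congrFun hd j

/-- If `π` is an extreme point of the associated polyhedron `P_f`, then there
are `n = |N|` subsets `S_1, …, S_n` whose constraints are tight at `π`, whose indicator
vectors are linearly independent, such that the `n+1` points
`(χ_{S_1}, f(S_1)), …, (χ_{S_n}, f(S_n)), (0,0)` of `Q_f` are affinely independent and lie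
on the hyperplane `π·x = z`; moreover `(0,1) ∈ Q_f` with `π·0 < 1`, so the face is proper. -/
theorem extreme_point_gives_facet_data
    {α : Type*} [Fintype α] [DecidableEq α]
    (f : Finset α → ℝ) (hf : f ∅ = 0) (π : α → ℝ)
    (hext : π ∈ Set.extremePoints ℝ
      {p : α → ℝ | ∀ S : Finset α, ∑ i ∈ S, p i ≤ f S}) :
    ∃ S : Fin (Fintype.card α) → Finset α,
      (∀ i, ∑ j ∈ S i, π j = f (S i)) ∧
      LinearIndependent ℝ
        (fun i : Fin (Fintype.card α) => (fun j => if j ∈ S i then (1 : ℝ) else 0 : α → ℝ)) ∧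
      AffineIndependent ℝ
        (Fin.cons ((0 : α → ℝ), (0 : ℝ))
          (fun i : Fin (Fintype.card α) =>
            ((fun j => if j ∈ S i then (1 : ℝ) else 0 : α → ℝ), f (S i)))) ∧
      (∀ i, ((fun j => if j ∈ S i then (1 : ℝ) else 0 : α → ℝ), f (S i)) ∈
        convexHull ℝ {p : (α → ℝ) × ℝ | ∃ T : Finset α,
          p.1 = (fun j => if j ∈ T then (1 : ℝ) else 0) ∧ f T ≤ p.2}) ∧
      (∀ i, ∑ j, π j * (if j ∈ S i then (1 : ℝ) else 0) = f (S i)) ∧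
      ((0 : α → ℝ), (1 : ℝ)) ∈ convexHull ℝ {p : (α → ℝ) × ℝ | ∃ T : Finset α,
          p.1 = (fun j => if j ∈ T then (1 : ℝ) else 0) ∧ f T ≤ p.2} ∧
      ∑ j, π j * (0 : ℝ) < 1 := by
  obtain ⟨κ, a, -, hspan, hli⟩ := exists_linearIndependent' ℝ
    (fun S : {S : Finset α // ∑ i ∈ S, π i = f S} =>
      (fun j => if j ∈ S.1 then (1 : ℝ) else 0 : α → ℝ))
  rw [span_tight_eq_top f π hext] at hspan
  let b := Module.Basis.mk hli hspan.ge
  have : Fintype κ := FiniteDimensional.fintypeBasisIndex b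
  have hcard : Fintype.card (Fin (Fintype.card α)) = Fintype.card κ := by
    rw [← Module.finrank_eq_card_basis b, Module.finrank_fintype_fun_eq_card, Fintype.card_fin]
  let e : Fin (Fintype.card α) ≃ κ := Fintype.equivOfCardEq hcard
  have hS : LinearIndependent ℝ (fun i : Fin (Fintype.card α) =>
      (fun j => if j ∈ (a (e i)).1 then (1 : ℝ) else 0 : α → ℝ)) :=
    hli.comp e e.injective
  refine ⟨fun i => (a (e i)).1, fun i => (a (e i)).2, hS, ?_, ?_, ?_, ?_, by simp⟩
  · rw [affineIndependent_iff_linearIndependent_vsub ℝ _ (0 : Fin (Fintype.card α + 1)),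
      ← linearIndependent_equiv (finSuccAboveEquiv (0 : Fin (Fintype.card α + 1)))]
    -- Projecting to the first component reduces to the independence of the indicator vectors.
    refine LinearIndependent.of_comp (LinearMap.fst ℝ (α → ℝ) ℝ) ?_
    convert hS using 1
    swap
    · rfl
    ext i j
    simp [finSuccAboveEquiv_apply]
  · exact fun i => subset_convexHull ℝ _ ⟨_, rfl, le_rfl⟩
  · intro i
    rw [← (a (e i)).2]
    simp
  · exact subset_convexHull ℝ _ ⟨∅, by ext; simp, by simp [hf]⟩
end

section
/- Let N be a finite set and f : 2^N → ℝ a submodular set function with f(∅) = 0. Fix an enumeration e_1, …, e_n of N, let S_0 = ∅ and S_i = {e_1, …, e_i}, and define the greedy vector π ∈ ℝ^N by π_{e_i} = f(S_i) − f(S_{i−1}) for i = 1, …, n. Then π ∈ P_f, i.e., Σ_{i∈S} π_i ≤ f(S) for every S ⊆ N, and moreover π(S_i) = f(S_i) for every i = 0, 1, …, n. (Edmonds' greedy feasibility, used in Remark 2 and Proposition 4.) -/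
/-! Intersect `S` with the prefixes and induct on `k` to get `π(S ∩ S_k) ≤ f(S ∩ S_k)`. When the new
element `e_{k+1}` lies in `S`, submodularity applied to `S ∩ S_{k+1}` and `S_k`, whose union is
`S_{k+1}` and whose intersection is `S ∩ S_k`, gives
`π_{e_{k+1}} = f(S_{k+1}) - f(S_k) ≤ f(S ∩ S_{k+1}) - f(S ∩ S_k)`.
Tightness on prefixes is the telescoping sum of the defining differences. -/

/-- `prefixSet e k` is the set `S_k = {e_1, …, e_k}` of the first `k` elements of the
enumeration `e` of the ground set. -/
def prefixSet {α : Type*} [DecidableEq α] {n : ℕ} (e : Fin n ≃ α) (k : ℕ) : Finset α :=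
  (Finset.univ.filter (fun j : Fin n => (j : ℕ) < k)).image e

theorem mem_prefixSet_apply {α : Type*} [DecidableEq α] {n : ℕ} (e : Fin n ≃ α) (k : ℕ)
    (i : Fin n) : e i ∈ prefixSet e k ↔ (i : ℕ) < k := by
  simp [prefixSet]

theorem prefixSet_zero {α : Type*} [DecidableEq α] {n : ℕ} (e : Fin n ≃ α) :
    prefixSet e 0 = ∅ := by
  simp [prefixSet]

theorem prefixSet_succ {α : Type*} [DecidableEq α] {n : ℕ} (e : Fin n ≃ α) (i : Fin n) :
    prefixSet e ((i : ℕ) + 1) = insert (e i) (prefixSet e (i : ℕ)) := by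
  ext a
  obtain ⟨j, rfl⟩ := e.surjective a
  rw [Finset.mem_insert, mem_prefixSet_apply, mem_prefixSet_apply, e.injective.eq_iff, Fin.ext_iff]
  omega

theorem prefixSet_card {α : Type*} [Fintype α] [DecidableEq α] {n : ℕ} (e : Fin n ≃ α) :
    prefixSet e n = Finset.univ := by
  ext a
  obtain ⟨j, rfl⟩ := e.surjective a
  simp [mem_prefixSet_apply]

/-- Edmonds' greedy feasibility. For a submodular `f` with `f ∅ = 0` and an
enumeration `e` of `N`, the greedy vector `π (e_i) = f(S_i) - f(S_{i-1})` belongs to `P_f`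
and is tight on every prefix set `S_i`. -/
theorem greedy_vector_mem_Pf_and_tight_on_prefixes
    {α : Type*} [Fintype α] [DecidableEq α]
    (f : Finset α → ℝ) (hf : f ∅ = 0)
    (hsub : ∀ S T : Finset α, f (S ∪ T) + f (S ∩ T) ≤ f S + f T)
    (e : Fin (Fintype.card α) ≃ α) (π : α → ℝ)
    (hπ : ∀ i : Fin (Fintype.card α),
      π (e i) = f (prefixSet e ((i : ℕ) + 1)) - f (prefixSet e (i : ℕ))) :
    (∀ S : Finset α, ∑ i ∈ S, π i ≤ f S) ∧
    (∀ k ≤ Fintype.card α, ∑ i ∈ prefixSet e k, π i = f (prefixSet e k)) := by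
  have hnot : ∀ i : Fin (Fintype.card α), e i ∉ prefixSet e (i : ℕ) := fun i => by
    simp [mem_prefixSet_apply]
  constructor
  · intro S
    have key : ∀ k ≤ Fintype.card α, ∑ i ∈ S ∩ prefixSet e k, π i ≤ f (S ∩ prefixSet e k) := by
      intro k
      induction k with
      | zero => simp [prefixSet_zero, hf]
      | succ k ih =>
        intro hk
        have ih := ih (by omega)
        have hs := prefixSet_succ e ⟨k, hk⟩
        have hp := hπ ⟨k, hk⟩
        have hn := hnot ⟨k, hk⟩
        dsimp only at hs hp hn
        by_cases hm : e ⟨k, hk⟩ ∈ S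
        · have h := hsub (S ∩ prefixSet e (k + 1)) (prefixSet e k)
          have hu : S ∩ prefixSet e (k + 1) ∪ prefixSet e k = prefixSet e (k + 1) := by
            rw [hs]; grind
          have hi : S ∩ prefixSet e (k + 1) ∩ prefixSet e k = S ∩ prefixSet e k := by
            rw [hs]; grind
          rw [hu, hi] at h
          have hsum : ∑ i ∈ S ∩ prefixSet e (k + 1), π i
              = π (e ⟨k, hk⟩) + ∑ i ∈ S ∩ prefixSet e k, π i := by
            rw [hs, Finset.inter_insert_of_mem hm, Finset.sum_insert (by simp [hn])]
          linarith
        · rw [hs, Finset.inter_insert_of_notMem hm]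
          exact ih
    have h := key _ le_rfl
    rwa [prefixSet_card, Finset.inter_univ] at h
  · intro k
    induction k with
    | zero => simp [prefixSet_zero, hf]
    | succ k ih =>
      intro hk
      have ih := ih (by omega)
      have hs := prefixSet_succ e ⟨k, hk⟩
      have hp := hπ ⟨k, hk⟩
      have hn := hnot ⟨k, hk⟩
      dsimp only at hs hp hn
      have hsum : ∑ i ∈ prefixSet e (k + 1), π i
          = π (e ⟨k, hk⟩) + ∑ i ∈ prefixSet e k, π i := by
        rw [hs, Finset.sum_insert hn]
      linarith
end

section
/- Let N be a finite set and f : 2^N → ℝ a submodular set function with f(∅) = 0. Then for every S ⊆ N, f(S) = max{π(S) : π ∈ P_f}; that is, π(S) ≤ f(S) for all π ∈ P_f and there exists π ∈ P_f with π(S) = f(S). (Equation (eq:necessary), established for submodular f.) -/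
/-!
The vector attaining `f S` is Edmonds' greedy vector: order the ground set so that `S` is an initial
segment and give each element its marginal contribution to the set of its predecessors. Every
initial segment is then tight, in particular `S`, and submodularity keeps all the constraints
satisfied as elements are added (`TightOn.update`). Running the greedy algorithm from `∅` up to `S`,
and then from `S` up to the whole ground set without changing the values on `S`
(`TightOn.exists_extend`), gives the required member of the polyhedron.
-/

/-- `π` satisfies the constraints of the polyhedron of `f` restricted to subsets of `A`, with
equality at `A` itself. -/
def TightOn {α : Type*} (f : Finset α → ℝ) (π : α → ℝ) (A : Finset α) : Prop :=
  (∀ T ⊆ A, ∑ i ∈ T, π i ≤ f T) ∧ ∑ i ∈ A, π i = f A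

/-- One greedy step: the new element gets its marginal contribution. -/
lemma TightOn.update {α : Type*} [DecidableEq α] {f : Finset α → ℝ}
    (hsub : ∀ S T : Finset α, f (S ∪ T) + f (S ∩ T) ≤ f S + f T)
    {π : α → ℝ} {A : Finset α} (h : TightOn f π A) {a : α} (ha : a ∉ A) :
    TightOn f (Function.update π a (f (insert a A) - f A)) (insert a A) := by
  obtain ⟨hle, heq⟩ := h
  have hsum : ∀ T : Finset α, a ∉ T →
      ∑ i ∈ T, Function.update π a (f (insert a A) - f A) i = ∑ i ∈ T, π i :=
    fun T hT => Finset.sum_update_of_notMem hT _ _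
  refine ⟨fun T hT => ?_, ?_⟩
  · by_cases haT : a ∈ T
    · have hTA : T.erase a ⊆ A := Finset.subset_insert_iff.mp hT
      -- Submodularity for `T` and `A`, whose union is `insert a A` and intersection `T.erase a`.
      have hunion : T ∪ A = insert a A := by grind
      have hinter : T ∩ A = T.erase a := by grind
      have hs := hsub T A
      rw [hunion, hinter] at hs
      rw [← Finset.add_sum_erase T _ haT, hsum _ (Finset.notMem_erase a T),
        Function.update_self]
      linarith [hle _ hTA]
    · rw [hsum T haT]
      exact hle T ((Finset.subset_insert_iff_of_notMem haT).mp hT)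
  · rw [Finset.sum_insert ha, hsum A ha, Function.update_self, heq]
    ring

lemma TightOn.exists_extend {α : Type*} [DecidableEq α] {f : Finset α → ℝ}
    (hsub : ∀ S T : Finset α, f (S ∪ T) + f (S ∩ T) ≤ f S + f T)
    {π : α → ℝ} {A : Finset α} (h : TightOn f π A) (D : Finset α) :
    ∃ π' : α → ℝ, TightOn f π' (D ∪ A) ∧ ∀ i ∈ A, π' i = π i := by
  induction D using Finset.induction_on with
  | empty => exact ⟨π, by simpa using h, fun _ _ => rfl⟩
  | insert a D _ ih =>
    obtain ⟨π', hπ', hagree⟩ := ih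
    rw [Finset.insert_union]
    by_cases ha : a ∈ D ∪ A
    · exact ⟨π', by rwa [Finset.insert_eq_of_mem ha], hagree⟩
    · refine ⟨_, hπ'.update hsub ha, fun i hi => ?_⟩
      have hia : i ≠ a := by
        rintro rfl
        exact ha (Finset.mem_union_right _ hi)
      rw [Function.update_of_ne hia, hagree i hi]

/-- For submodular `f` with `f ∅ = 0`, for every `S ⊆ N` one has
`f(S) = max{π(S) : π ∈ P_f}`: every `π ∈ P_f` satisfies `π(S) ≤ f(S)` and some
`π ∈ P_f` attains `π(S) = f(S)`. -/
theorem submodular_exactness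
    {α : Type*} [Fintype α] [DecidableEq α]
    (f : Finset α → ℝ) (hf : f ∅ = 0)
    (hsub : ∀ S T : Finset α, f (S ∪ T) + f (S ∩ T) ≤ f S + f T) :
    ∀ S : Finset α,
      (∀ π : α → ℝ, (∀ T : Finset α, ∑ i ∈ T, π i ≤ f T) → ∑ i ∈ S, π i ≤ f S) ∧
      (∃ π : α → ℝ, (∀ T : Finset α, ∑ i ∈ T, π i ≤ f T) ∧ ∑ i ∈ S, π i = f S) := by
  intro S
  refine ⟨fun π hπ => hπ S, ?_⟩
  have h0 : TightOn f 0 ∅ := by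
    refine ⟨fun T hT => ?_, by simp [hf]⟩
    simp [Finset.subset_empty.mp hT, hf]
  obtain ⟨σ, hσ, -⟩ := h0.exists_extend hsub S
  rw [Finset.union_empty] at hσ
  obtain ⟨π, hπ, hagree⟩ := hσ.exists_extend hsub Finset.univ
  refine ⟨π, fun T => hπ.1 T fun i _ => Finset.mem_union_left _ (Finset.mem_univ i), ?_⟩
  rw [Finset.sum_congr rfl hagree]
  exact hσ.2
end

section
/- Let N be a finite set and f : 2^N → ℝ a submodular set function with f(∅) = 0. Then the polar relaxation is exact: Q_f = {(x,z) ∈ ℝ^N × ℝ : 0 ≤ x ≤ 1 and π·x ≤ z for all π ∈ P_f}. That is, a point (x,z) with x ∈ [0,1]^N lies in the convex hull of the epigraph of f if and only if π·x ≤ z for every π ∈ P_f. (Main boxed result, consequence of Proposition 4.) -/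
/-!
The inclusion `⊆` holds because the right-hand side is convex and contains every `(χ_S, z)` with
`f S ≤ z`. For `⊇`, Edmonds' greedy algorithm is run on a point `x ∈ [0,1]^N`: listing the elements
by decreasing `x`-value and letting `π` be the marginal increments of `f` along the resulting chain
gives `π ∈ P_f` (this uses submodularity), while the layer-cake decomposition of `x` writes `x` as a
convex combination `∑ w_S χ_S` over the same chain with `∑ w_S f(S) = π·x`. If `π·x ≤ z`, then
`(x, z)` is the combination, with weights `w_S`, of the points `(χ_S, f(S) + (z - π·x))` of the
epigraph. Both `π` and `w` are produced in `greedy_exists`.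
-/

/-- Greedy algorithm on the ground set `A`: there is `π` in the base polytope of `f` restricted to
`A` such that for every level `c ≤ 1` below `x` on `A`, the vector `x - c` on `A` (zero elsewhere) is a nonnegative
combination, of total weight `1 - c`, of indicator vectors with `f`-value `π · (x - c)`.
Elements are inserted in decreasing order of `x`; the level `c` is what makes the induction go
through, since inserting a minimal element `a` uses the decomposition of `x - x a`. -/
lemma greedy_exists {α : Type*} [Fintype α] [DecidableEq α]
    (f : Finset α → ℝ) (hf : f ∅ = 0)
    (hsub : ∀ S T : Finset α, f (S ∪ T) + f (S ∩ T) ≤ f S + f T)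
    (x : α → ℝ) (hx1 : ∀ i, x i ≤ 1) (A : Finset α) :
    ∃ π : α → ℝ, (∀ S ⊆ A, ∑ i ∈ S, π i ≤ f S) ∧ ∑ i ∈ A, π i = f A ∧
      ∀ c : ℝ, (∀ i ∈ A, c ≤ x i) → c ≤ 1 → ∃ w : Finset α → ℝ,
        (∀ S, 0 ≤ w S) ∧ ∑ S, w S = 1 - c ∧
        (∀ i, ∑ S, w S * (if i ∈ S then 1 else 0) = if i ∈ A then x i - c else 0) ∧
        ∑ S, w S * f S = ∑ i ∈ A, π i * (x i - c) := by
  induction A using Finset.induction_on_min_value x with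
  | empty =>
    refine ⟨0, ?_, by simp [hf], ?_⟩
    · intro S hS
      simp [Finset.subset_empty.mp hS, hf]
    · intro c _ hc
      -- the leftover weight `1 - c` sits on the empty set, where `f` vanishes
      refine ⟨fun S => if S = ∅ then 1 - c else 0, ?_, ?_, ?_, ?_⟩
      · intro S
        dsimp only
        split_ifs <;> linarith
      · simp
      · intro i
        simp only [ite_mul, zero_mul, Finset.sum_ite_eq', Finset.mem_univ, if_true]
        simp
      · simp [ite_mul, hf]
  | insert a B haB hmin ih =>
    obtain ⟨π, hπ, hπB, hw⟩ := ih
    have hagree : ∀ i ∈ B, Function.update π a (f (insert a B) - f B) i = π i := by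
      intro i hi
      exact Function.update_of_ne (by rintro rfl; exact haB hi) _ _
    have hsum : ∀ S ⊆ B, ∑ i ∈ S, Function.update π a (f (insert a B) - f B) i
        = ∑ i ∈ S, π i := fun S hS => Finset.sum_congr rfl fun i hi => hagree i (hS hi)
    refine ⟨Function.update π a (f (insert a B) - f B), ?_, ?_, ?_⟩
    · intro S hS
      by_cases ha : a ∈ S
      · have hSB : S.erase a ⊆ B := Finset.subset_insert_iff.mp hS
        have hunion : S ∪ B = insert a B := by
          ext i
          have := @hS i
          simp only [Finset.mem_union, Finset.mem_insert] at *
          constructor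
          · rintro (h | h)
            · exact this h
            · exact Or.inr h
          · rintro (rfl | h)
            · exact Or.inl ha
            · exact Or.inr h
        have hinter : S ∩ B = S.erase a := by
          ext i
          simp only [Finset.mem_inter, Finset.mem_erase]
          constructor
          · rintro ⟨h, hB⟩
            exact ⟨by rintro rfl; exact haB hB, h⟩
          · rintro ⟨hne, h⟩
            exact ⟨h, hSB (Finset.mem_erase.mpr ⟨hne, h⟩)⟩
        have h1 := hsub S B
        rw [hunion, hinter] at h1
        have h2 := hπ _ hSB
        rw [← Finset.add_sum_erase _ _ ha, hsum _ hSB, Function.update_self]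
        linarith
      · have hSB : S ⊆ B := (Finset.subset_insert_iff_of_notMem ha).mp hS
        rw [hsum S hSB]
        exact hπ S hSB
    · rw [Finset.sum_insert haB, hsum B subset_rfl, Function.update_self, hπB]
      ring
    · intro c hc _
      obtain ⟨w, hw0, hw1, hwx, hwf⟩ := hw (x a) hmin (hx1 a)
      have hca : c ≤ x a := hc a (Finset.mem_insert_self a B)
      -- the layer between the levels `c` and `x a` is carried by the new chain member
      refine ⟨fun S => w S + if S = insert a B then x a - c else 0, ?_, ?_, ?_, ?_⟩
      · intro S
        have := hw0 S
        dsimp only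
        split_ifs <;> linarith
      · rw [Finset.sum_add_distrib, hw1]
        simp
      · intro i
        simp only [add_mul, Finset.sum_add_distrib, hwx, ite_mul, zero_mul,
          Finset.sum_ite_eq', Finset.mem_univ, if_true, Finset.mem_insert]
        by_cases hia : i = a
        · subst hia
          simp [haB]
        · by_cases hiB : i ∈ B <;> simp [hia, hiB]
      · simp only [add_mul, Finset.sum_add_distrib, hwf, ite_mul, zero_mul,
          Finset.sum_ite_eq', Finset.mem_univ, if_true]
        have hdot : ∑ i ∈ B, Function.update π a (f (insert a B) - f B) i * (x i - c)
            = ∑ i ∈ B, π i * (x i - c) :=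
          Finset.sum_congr rfl fun i hi => by rw [hagree i hi]
        rw [Finset.sum_insert haB, Function.update_self, hdot]
        simp only [mul_sub, Finset.sum_sub_distrib, ← Finset.sum_mul, hπB]
        ring

/-- For submodular `f` with `f ∅ = 0`, the polar relaxation is exact:
`Q_f = {(x,z) : 0 ≤ x ≤ 1 and π·x ≤ z for all π ∈ P_f}`. -/
theorem submodular_polar_relaxation_exact
    {α : Type*} [Fintype α] [DecidableEq α]
    (f : Finset α → ℝ) (hf : f ∅ = 0)
    (hsub : ∀ S T : Finset α, f (S ∪ T) + f (S ∩ T) ≤ f S + f T) :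
    convexHull ℝ {p : (α → ℝ) × ℝ | ∃ S : Finset α,
        p.1 = (fun i => if i ∈ S then (1 : ℝ) else 0) ∧ f S ≤ p.2}
      = {p : (α → ℝ) × ℝ | (∀ i, 0 ≤ p.1 i ∧ p.1 i ≤ 1) ∧
          ∀ π : α → ℝ, (∀ S : Finset α, ∑ i ∈ S, π i ≤ f S) →
            ∑ i, π i * p.1 i ≤ p.2} := by
  apply Set.Subset.antisymm
  · apply convexHull_min
    · rintro ⟨x, z⟩ ⟨S, hx, hz⟩
      dsimp only at hx hz
      subst hx
      refine ⟨fun i => ?_, fun π hπ => ?_⟩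
      · dsimp only
        split_ifs <;> norm_num
      · simpa using (hπ S).trans hz
    · rintro ⟨x, z⟩ ⟨hx, hxz⟩ ⟨y, u⟩ ⟨hy, hyu⟩ a b ha hb hab
      refine ⟨fun i => ?_, fun π hπ => ?_⟩
      · obtain ⟨h1, h2⟩ := hx i
        obtain ⟨h3, h4⟩ := hy i
        dsimp at h1 h2 h3 h4 ⊢
        constructor
        · positivity
        · nlinarith
      · have h1 := mul_le_mul_of_nonneg_left (hxz π hπ) ha
        have h2 := mul_le_mul_of_nonneg_left (hyu π hπ) hb
        calc ∑ i, π i * (a * x i + b * y i)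
            = a * ∑ i, π i * x i + b * ∑ i, π i * y i := by
              rw [Finset.mul_sum, Finset.mul_sum, ← Finset.sum_add_distrib]
              exact Finset.sum_congr rfl fun i _ => by ring
          _ ≤ a * z + b * u := add_le_add h1 h2
  · rintro ⟨x, z⟩ ⟨hx, hxz⟩
    obtain ⟨π, hπ, -, hw⟩ := greedy_exists f hf hsub x (fun i => (hx i).2) Finset.univ
    obtain ⟨w, hw0, hw1, hwx, hwf⟩ := hw 0 (fun i _ => (hx i).1) zero_le_one
    simp only [sub_zero, Finset.mem_univ, if_true] at hw1 hwx hwf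
    have hle : ∑ i, π i * x i ≤ z := hxz π fun S => hπ S (Finset.subset_univ S)
    have hcomb : ((x, z) : (α → ℝ) × ℝ) = ∑ S : Finset α, w S •
        (((fun i => if i ∈ S then (1 : ℝ) else 0), f S + (z - ∑ i, π i * x i)) :
          (α → ℝ) × ℝ) := by
      refine Prod.ext ?_ ?_
      · funext i
        simpa [Prod.fst_sum, Finset.sum_apply] using (hwx i).symm
      · simp only [Prod.snd_sum, Prod.smul_snd, smul_eq_mul, mul_add, Finset.sum_add_distrib,
          ← Finset.sum_mul, hwf, hw1]
        ring
    rw [hcomb]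
    refine (convex_convexHull ℝ _).sum_mem (fun S _ => hw0 S) hw1 fun S _ => ?_
    exact subset_convexHull ℝ _ ⟨S, rfl, by dsimp only; linarith⟩
end

section
/- Let N be a finite set and f : 2^N → ℝ any set function with f(∅) = 0. Let x ∈ [0,1]^N and let e_1, …, e_n be an enumeration of N with x_{e_1} ≥ … ≥ x_{e_n}; set S_i = {e_1, …, e_i} and define the Lovász extension value f̂(x) := Σ_{i=1}^{n−1} (x_{e_i} − x_{e_{i+1}}) f(S_i) + x_{e_n} f(S_n). Then (x, f̂(x)) ∈ Q_f; that is, the epigraph of the Lovász extension is contained in the convex hull of the epigraph of f (epi f̂ ⊆ Q_f). -/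
/-- The Lovász extension value
`f̂(x) = Σ_{i=1}^{n-1} (x_{e_i} - x_{e_{i+1}}) f(S_i) + x_{e_n} f(S_n)`
of a set function `f` at `x`, along an enumeration `e` (with the convention
`x_{e_{n+1}} = 0`, so the last summand is `x_{e_n} f(S_n)`). -/
def lovasz {α : Type*} [Fintype α] [DecidableEq α] (f : Finset α → ℝ)
    (e : Fin (Fintype.card α) ≃ α) (x : α → ℝ) : ℝ :=
  ∑ i : Fin (Fintype.card α),
    (x (e i) - if h : (i : ℕ) + 1 < Fintype.card α then x (e ⟨(i : ℕ) + 1, h⟩) else 0) *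
      f (prefixSet e ((i : ℕ) + 1))

/-- The sorted coordinates of `x`, padded to a sequence on `ℕ`: index `0` carries the value `1`,
index `k + 1` the `k`-th (counting from `0`) coordinate along `e`, and later indices `0`. -/
def paddedSeq {α : Type*} {n : ℕ} (e : Fin n ≃ α) (x : α → ℝ) : ℕ → ℝ
  | 0 => 1
  | k + 1 => if h : k < n then x (e ⟨k, h⟩) else 0

lemma paddedSeq_succ_le {α : Type*} {n : ℕ} (e : Fin n ≃ α) (x : α → ℝ)
    (hx : ∀ i, 0 ≤ x i ∧ x i ≤ 1) (hsort : ∀ i j : Fin n, i ≤ j → x (e j) ≤ x (e i)) (k : ℕ) :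
    paddedSeq e x (k + 1) ≤ paddedSeq e x k := by
  cases k with
  | zero =>
    simp only [paddedSeq]
    split_ifs
    · exact (hx _).2
    · exact zero_le_one
  | succ k =>
    simp only [paddedSeq]
    split_ifs with h1 h2 h2
    · exact hsort _ _ (Fin.mk_le_mk.2 (Nat.le_succ k))
    · omega
    · exact (hx _).1
    · exact le_rfl

lemma mem_prefixSet {α : Type*} [DecidableEq α] {n : ℕ} (e : Fin n ≃ α) (k : ℕ) (j : Fin n) :
    e j ∈ prefixSet e k ↔ (j : ℕ) < k := by
  simp [prefixSet]

lemma sum_tail_telescope (y : ℕ → ℝ) (j m : ℕ) (hm : j + 1 ≤ m) :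
    ∑ k ∈ Finset.range m, (y k - y (k + 1)) * (if j < k then (1 : ℝ) else 0) =
      y (j + 1) - y m := by
  induction m, hm using Nat.le_induction with
  | base =>
    rw [sub_self]
    refine Finset.sum_eq_zero fun k hk => ?_
    rw [Finset.mem_range] at hk
    rw [if_neg (by omega), mul_zero]
  | succ m hm ih =>
    rw [Finset.sum_range_succ, ih, if_pos (by omega)]
    ring

/-- For any set function `f` with `f ∅ = 0` and any `x ∈ [0,1]^N` sorted
nonincreasingly along the enumeration `e`, the point `(x, f̂(x))` lies in `Q_f`;
that is, `epi f̂ ⊆ Q_f`. -/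
theorem lovasz_point_mem_Qf
    {α : Type*} [Fintype α] [DecidableEq α]
    (f : Finset α → ℝ) (hf : f ∅ = 0)
    (x : α → ℝ) (hx : ∀ i, 0 ≤ x i ∧ x i ≤ 1)
    (e : Fin (Fintype.card α) ≃ α)
    (hsort : ∀ i j : Fin (Fintype.card α), i ≤ j → x (e j) ≤ x (e i)) :
    (x, lovasz f e x) ∈ convexHull ℝ {p : (α → ℝ) × ℝ | ∃ S : Finset α,
        p.1 = (fun i => if i ∈ S then (1 : ℝ) else 0) ∧ f S ≤ p.2} := by
  set y := paddedSeq e x with hy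
  have hend : y (Fintype.card α + 1) = 0 := by simp [hy, paddedSeq]
  have key : (x, lovasz f e x) = ∑ k ∈ Finset.range (Fintype.card α + 1), (y k - y (k + 1)) •
      ((fun i => if i ∈ prefixSet e k then (1 : ℝ) else 0, f (prefixSet e k)) :
        (α → ℝ) × ℝ) := by
    refine Prod.ext ?_ ?_
    · funext a
      obtain ⟨j, rfl⟩ := e.surjective a
      have hj : y (j + 1) = x (e j) := by simp [hy, paddedSeq]
      have := sum_tail_telescope y j (Fintype.card α + 1) (by omega)
      rw [hend, sub_zero, hj] at this
      simp only [Prod.fst_sum, Finset.sum_apply, Prod.smul_fst, Pi.smul_apply, smul_eq_mul,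
        mem_prefixSet]
      exact this.symm
    · have h0 : f (prefixSet e 0) = 0 := by simpa [prefixSet] using hf
      simp only [Prod.snd_sum, Prod.smul_snd, smul_eq_mul]
      rw [Finset.sum_range_succ', h0, mul_zero, add_zero, Finset.sum_range, lovasz]
      refine Finset.sum_congr rfl fun i _ => ?_
      simp [hy, paddedSeq]
  rw [key]
  refine (convex_convexHull ℝ _).sum_mem
    (fun k _ => sub_nonneg.2 (paddedSeq_succ_le e x hx hsort k)) ?_
    (fun k _ => subset_convexHull ℝ _ ⟨prefixSet e k, rfl, le_rfl⟩)
  rw [Finset.sum_range_sub', hend, sub_zero]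
  rfl
end

section
/- Define f : 2^{\{1,2,3\}} → ℝ by f(∅) = 0, f({i}) = 1 for each i ∈ {1,2,3}, f({i,j}) = 1.9 for each pair of distinct i, j, and f({1,2,3}) = 2.85. Then for every S ⊆ {1,2,3}, f(S) = max{π(S) : π ∈ P_f}: there exists π ∈ P_f with π(S) = f(S) (e.g., for S = {1,2,3} take π = (0.95, 0.95, 0.95)). Hence a non-submodular set function can satisfy the exactness condition f(S) = max{π(S) : π ∈ P_f} for all S. (Example 2, second claim.) -/
/-! For nonempty `S` the average value `f(S) / |S|` is `1, 0.95, 0.95` for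
`|S| = 1, 2, 3`, hence nonincreasing. Spreading `f(S)` evenly over `S`, and putting `0` outside,
therefore gives a point `π` with `π(T) = |T ∩ S| * f(S) / |S| ≤ f(T ∩ S) ≤ f(T)` for all `T`, which
is tight at `S`. Submodularity fails at two distinct pairs: `2.85 + 1 > 1.9 + 1.9`. -/

/-- The set function of Example 2: `f(∅) = 0`, `f({i}) = 1`, `f({i,j}) = 1.9` for
distinct `i,j`, and `f({1,2,3}) = 2.85`, encoded on the ground set `Fin 3`. -/
def exampleF : Finset (Fin 3) → ℝ := fun S =>
  if S.card = 0 then 0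
  else if S.card = 1 then 1
  else if S.card = 2 then 1.9
  else 2.85

/-- The non-submodular function of Example 2 nevertheless satisfies the
exactness condition `f(S) = max{π(S) : π ∈ P_f}` for every `S`: every `π ∈ P_f` satisfies
`π(S) ≤ f(S)` and some `π ∈ P_f` attains `π(S) = f(S)`. -/
theorem exampleF_exactness_without_submodularity :
    (¬ ∀ S T : Finset (Fin 3),
        exampleF (S ∪ T) + exampleF (S ∩ T) ≤ exampleF S + exampleF T) ∧
    ∀ S : Finset (Fin 3),
      (∀ π : Fin 3 → ℝ, (∀ T : Finset (Fin 3), ∑ i ∈ T, π i ≤ exampleF T) →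
        ∑ i ∈ S, π i ≤ exampleF S) ∧
      (∃ π : Fin 3 → ℝ, (∀ T : Finset (Fin 3), ∑ i ∈ T, π i ≤ exampleF T) ∧
        ∑ i ∈ S, π i = exampleF S) := by
  constructor
  · intro h
    have h1 := h {0, 1} {1, 2}
    rw [show ({0, 1} ∪ {1, 2} : Finset (Fin 3)) = {0, 1, 2} by decide,
      show ({0, 1} ∩ {1, 2} : Finset (Fin 3)) = {1} by decide] at h1
    simp only [exampleF, show ({0, 1, 2} : Finset (Fin 3)).card = 3 by decide,
      show ({0, 1} : Finset (Fin 3)).card = 2 by decide,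
      show ({1, 2} : Finset (Fin 3)).card = 2 by decide,
      show ({1} : Finset (Fin 3)).card = 1 by decide] at h1
    norm_num at h1
  · intro S
    refine ⟨fun π h => h S, fun i => if i ∈ S then (if S.card = 1 then 1 else 0.95) else 0, ?_, ?_⟩
    · intro T
      rw [← Finset.sum_filter, Finset.sum_const, Finset.filter_mem_eq_inter, nsmul_eq_mul]
      have hS := Finset.card_le_card (Finset.inter_subset_right : T ∩ S ⊆ S)
      have hT := Finset.card_le_card (Finset.inter_subset_left : T ∩ S ⊆ T)
      have h3 : T.card ≤ 3 := Finset.card_le_univ T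
      unfold exampleF
      generalize (T ∩ S).card = a at *
      generalize T.card = t at *
      -- If `|S| = 1` then `|T ∩ S| ≤ 1`; otherwise the weight is `0.95` and `|T ∩ S| ≤ |T|` suffices.
      by_cases hS1 : S.card = 1
      · rw [if_pos hS1]
        rw [hS1] at hS
        interval_cases t <;> interval_cases a <;> norm_num
      · rw [if_neg hS1]
        clear hS
        interval_cases t <;> interval_cases a <;> norm_num
    · rw [← Finset.sum_filter, Finset.sum_const, Finset.filter_mem_eq_inter, nsmul_eq_mul,
        Finset.inter_self]
      have h3 : S.card ≤ 3 := Finset.card_le_univ S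
      unfold exampleF
      generalize S.card = s at *
      interval_cases s <;> norm_num
end
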